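/- arXiv:0710.2898 — 2 statements merged into one kernel-verified Lean document; each statement's English description precedes it below -/
import Mathlib

section
/- Let ℋ be a complex Hilbert space, let A ∈ B(ℋ) be self-adjoint, and let 1 ≤ r < k ≤ dim ℋ. Let 𝒮 be any subset of F_r containing the set {±2‖A‖P : P ∈ P_r}. Then Λ_k(A) = ⋂{Λ_{k−r}(A + F) : F ∈ 𝒮}. -/
noncomputable section

open scoped InnerProductSpace
open Complex

variable {H : Type*} [NormedAddCommGroup H] [InnerProductSpace ℂ H] [CompleteSpace H]

/-- `P` is an orthogonal projection: self-adjoint and idempotent. -/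
def IsOrthProj (P : H →L[ℂ] H) : Prop :=
  IsSelfAdjoint P ∧ P ∘L P = P

/-- The rank of a bounded operator, as a cardinal. -/
def opRank (F : H →L[ℂ] H) : Cardinal :=
  Module.rank ℂ (LinearMap.range (F : H →ₗ[ℂ] H))

/-- The rank-`k` numerical range `Λ_k(A)`. -/
def rankKRange (k : ℕ) (A : H →L[ℂ] H) : Set ℂ :=
  { lam | ∃ P : H →L[ℂ] H, IsOrthProj P ∧ opRank P = k ∧ P ∘L A ∘L P = lam • P }

/-- The classical numerical range `W(A)`. -/
def numRange (A : H →L[ℂ] H) : Set ℂ :=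
  { z | ∃ x : H, ‖x‖ = 1 ∧ ⟪x, A x⟫_ℂ = z }

/-- `λ_k(T)`: the supremum over `k`-dimensional compressions of the `k`-th largest
eigenvalue of the compression (Courant–Fischer form: sup over `k`-dimensional
subspaces of the infimum of the Rayleigh quotient). -/
def lambdaSA (k : ℕ) (T : H →L[ℂ] H) : ℝ :=
  sSup { t : ℝ | ∃ V : Submodule ℂ H, Module.finrank ℂ V = k ∧
    ∀ x ∈ V, ‖x‖ = 1 → t ≤ (⟪x, T x⟫_ℂ).re }

/-- The real part `(T + T*)/2` of an operator. -/
def reOp (T : H →L[ℂ] H) : H →L[ℂ] H :=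
  (2 : ℂ)⁻¹ • (T + ContinuousLinearMap.adjoint T)

/-- The set `Ω_k(A)`. -/
def omegaK (k : ℕ) (A : H →L[ℂ] H) : Set ℂ :=
  { μ | ∀ ξ ∈ Set.Ico (0 : ℝ) (2 * Real.pi),
      (Complex.exp (ξ * Complex.I) * μ).re ≤ lambdaSA k (reOp (Complex.exp (ξ * Complex.I) • A)) }

/-!
Compressing to a subspace turns `lam ∈ rankKRange k A` into the existence of a `k`-dimensional
subspace on which the form `⟪x, (A - lam) x⟫` vanishes. One inclusion is then a dimension count:
restrict to the kernel of `F`.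

For the other one, `lam = t` is real, and it suffices to find two `k`-dimensional subspaces on which
the Hermitian form of `B = A - t` is nonnegative, respectively nonpositive: a common isotropic
subspace can be enlarged one vector at a time until its dimension reaches `k`. Let `E = ker B⁻` be
the nonnegative spectral subspace of `B`. If `dim E < k = r + m`, choose `U` of dimension `r`
comparable with `E`. On the `m`-dimensional subspace `X` provided by `A - 2‖A‖ P_U`, we have
`⟪x, B x⟫ = 2‖A‖ ‖P_U x‖²`, and some nonzero `x ∈ X` satisfies `‖P_E x‖ ≤ ‖P_U x‖`. This contradicts
`⟪x, B x⟫ ≤ ⟪P_E x, B (P_E x)⟫ ≤ 2‖A‖ ‖P_E x‖²`, as one of the two inequalities is strict. The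
nonpositive subspace comes from applying this to `-A`.
-/

section Subspaces

universe u v

variable {K : Type*} {V : Type u} {W : Type v} [DivisionRing K] [AddCommGroup V] [Module K V]
  [AddCommGroup W] [Module K W]

theorem exists_submodule_le_rank_eq {G : Submodule K V} {n : ℕ}
    (hn : (n : Cardinal) ≤ Module.rank K G) : ∃ U ≤ G, Module.rank K U = n := by
  obtain ⟨v, hv⟩ := Module.le_rank_iff.1 hn
  have := FiniteDimensional.span_of_finite K (Set.finite_range (G.subtype ∘ v))
  refine ⟨Submodule.span K (Set.range (G.subtype ∘ v)),
    Submodule.span_le.2 (Set.range_subset_iff.2 fun i => (v i).2), ?_⟩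
  rw [← Module.finrank_eq_rank, finrank_span_eq_card (hv.map' G.subtype G.ker_subtype),
    Fintype.card_fin]

theorem exists_submodule_between_rank_eq {E G : Submodule K V} (hEG : E ≤ G) {n : ℕ}
    (hE : Module.rank K E ≤ n) (hG : (n : Cardinal) ≤ Module.rank K G) :
    ∃ U, E ≤ U ∧ U ≤ G ∧ Module.rank K U = n := by
  obtain ⟨C, hEC, rfl⟩ := IsModularLattice.exists_disjoint_and_sup_eq hEG
  obtain ⟨e, he⟩ := Cardinal.lt_aleph0.1 (hE.trans_lt Cardinal.natCast_lt_aleph0)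
  obtain ⟨d, rfl⟩ := Nat.exists_eq_add_of_le (show e ≤ n by rw [he] at hE; exact_mod_cast hE)
  have rank_sup {W : Submodule K V} (hW : W ≤ C) :
      Module.rank K ↑(E ⊔ W) = e + Module.rank K W := by
    rw [← he, ← Submodule.rank_sup_add_rank_inf_eq, (hEC.mono_right hW).eq_bot, rank_bot, add_zero]
  rw [rank_sup le_rfl, Nat.cast_add, add_comm, add_comm (e : Cardinal),
    Cardinal.add_nat_le_add_nat_iff] at hG
  obtain ⟨W, hWC, hW⟩ := exists_submodule_le_rank_eq hG
  exact ⟨E ⊔ W, le_sup_left, sup_le_sup_left hWC E, by rw [rank_sup hWC, hW, Nat.cast_add]⟩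

theorem exists_comparable_submodule_rank_eq (E : Submodule K V) {n : ℕ}
    (hn : (n : Cardinal) ≤ Module.rank K V) :
    ∃ U : Submodule K V, Module.rank K U = n ∧ (U ≤ E ∨ E ≤ U) := by
  rcases le_total (n : Cardinal) (Module.rank K E) with h | h
  · obtain ⟨U, hUE, hU⟩ := exists_submodule_le_rank_eq h
    exact ⟨U, hU, .inl hUE⟩
  · obtain ⟨U, hEU, -, hU⟩ := exists_submodule_between_rank_eq le_top h (by rwa [rank_top])
    exact ⟨U, hU, .inr hEU⟩

theorem rank_sup_span_singleton {U : Submodule K V} {x : V} (hx : x ∉ U) :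
    Module.rank K ↑(U ⊔ Submodule.span K {x}) = Module.rank K U + 1 := by
  have hx0 : x ≠ 0 := fun h => hx (h ▸ U.zero_mem)
  have h := Submodule.rank_sup_add_rank_inf_eq U (Submodule.span K {x})
  rwa [((Submodule.disjoint_span_singleton' hx0).2 hx).eq_bot, rank_bot, add_zero,
    Module.rank_eq_one_iff_finrank_eq_one.2 (finrank_span_singleton hx0)] at h

theorem le_rank_inf_ker_of_rank_range_le {f : V →ₗ[K] W} {G : Submodule K V} {r m : ℕ}
    (hf : Module.rank K (LinearMap.range f) ≤ r) (hG : Module.rank K G = (r + m : ℕ)) :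
    (m : Cardinal) ≤ Module.rank K ↑(G ⊓ LinearMap.ker f) := by
  have rank_nullity := LinearMap.lift_rank_range_add_rank_ker (f.domRestrict G)
  rw [hG, LinearMap.ker_domRestrict, ← rank_map_eq G.subtype_injective, Submodule.map_comap_subtype,
    Cardinal.lift_natCast, Nat.cast_add, add_comm] at rank_nullity
  have rank_range_le : Cardinal.lift.{u} (Module.rank K (LinearMap.range (f.domRestrict G))) ≤ r :=
    Cardinal.lift_le_nat_iff.2
      ((Submodule.rank_mono (LinearMap.range_domRestrict_le_range f G)).trans hf)
  rw [← Cardinal.nat_le_lift_iff.{u, v}, ← Cardinal.add_nat_le_add_nat_iff (n := r),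
    add_comm (m : Cardinal), ← rank_nullity]
  gcongr

end Subspaces

section HermitianForm

variable {𝕜 E : Type*} [RCLike 𝕜] [NormedAddCommGroup E] [InnerProductSpace 𝕜 E]

theorem exists_mem_ne_zero_map_mem_orthogonal (T : E →ₗ[𝕜] E) {W X : Submodule 𝕜 E}
    [FiniteDimensional 𝕜 W] [FiniteDimensional 𝕜 X]
    (h : Module.finrank 𝕜 W < Module.finrank 𝕜 X) : ∃ x ∈ X, x ≠ 0 ∧ T x ∈ Wᗮ := by
  let f : X →ₗ[𝕜] W := (W.orthogonalProjectionOnto : E →ₗ[𝕜] W) ∘ₗ T ∘ₗ X.subtype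
  obtain ⟨x, hx, hx0⟩ :=
    (Submodule.ne_bot_iff _).1 (LinearMap.ker_ne_bot_of_finrank_lt (f := f) h)
  refine ⟨x, x.2, by simpa using hx0, ?_⟩
  rw [← W.ker_orthogonalProjectionOnto]
  exact hx

/-- The Hermitian form `⟪x, B x⟫` of `B` is positive semidefinite on `V`; nonpositivity is expressed
as `IsNonnegOn (-B) V`. -/
def IsNonnegOn (B : E →ₗ[𝕜] E) (V : Submodule 𝕜 E) : Prop :=
  ∀ x ∈ V, 0 ≤ RCLike.re ⟪x, B x⟫_𝕜

/-- `V` is an isotropic subspace for the form `⟪x, B x⟫`. Taking `B = A - lam • 1` encodes that the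
compression of `A` to `V` is the scalar `lam`. -/
def IsIsotropicOn (B : E →ₗ[𝕜] E) (V : Submodule 𝕜 E) : Prop :=
  ∀ x ∈ V, ⟪x, B x⟫_𝕜 = 0

variable {B : E →ₗ[𝕜] E} {V V' Z : Submodule 𝕜 E}

theorem IsNonnegOn.inner_map_eq_zero (hB : B.IsSymmetric) (hV : IsNonnegOn B V) {x y : E}
    (hx : x ∈ V) (hy : y ∈ V) (hxx : ⟪x, B x⟫_𝕜 = 0) : ⟪x, B y⟫_𝕜 = 0 := by
  let form : PreInnerProductSpace.Core 𝕜 V :=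
    { inner x y := ⟪(x : E), B y⟫_𝕜
      conj_inner_symm x y := by rw [inner_conj_symm, hB]
      re_inner_nonneg x := hV x x.2
      add_left x y z := by simp [inner_add_left]
      smul_left x y c := by simp [inner_smul_left] }
  have cauchy_schwarz :=
    @InnerProductSpace.Core.inner_mul_inner_self_le 𝕜 V _ _ _ form ⟨x, hx⟩ ⟨y, hy⟩
  change ‖⟪x, B y⟫_𝕜‖ * ‖⟪y, B x⟫_𝕜‖ ≤ RCLike.re ⟪x, B x⟫_𝕜 * _ at cauchy_schwarz
  rw [hxx, map_zero, zero_mul, ← hB, norm_inner_symm, ← sq] at cauchy_schwarz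
  rw [← hB, inner_eq_zero_symm, ← norm_eq_zero, ← sq_eq_zero_iff]
  exact cauchy_schwarz.antisymm (sq_nonneg _)

theorem IsNonnegOn.exists_mem_notMem_map_mem_orthogonal [FiniteDimensional 𝕜 V]
    [FiniteDimensional 𝕜 Z] (hB : B.IsSymmetric) (hV : IsNonnegOn B V) (hZ : IsIsotropicOn B Z)
    (h : Module.finrank 𝕜 Z < Module.finrank 𝕜 V) : ∃ p ∈ V, p ∉ Z ∧ B p ∈ Zᗮ := by
  have hdimZ := Submodule.finrank_add_inf_finrank_orthogonal (inf_le_left : Z ⊓ V ≤ Z)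
  have hdimV := Submodule.finrank_add_inf_finrank_orthogonal (inf_le_right : Z ⊓ V ≤ V)
  obtain ⟨p, ⟨hpo, hpV⟩, hp0, hBp⟩ := exists_mem_ne_zero_map_mem_orthogonal B
    (W := (Z ⊓ V)ᗮ ⊓ Z) (X := (Z ⊓ V)ᗮ ⊓ V) (by lia)
  refine ⟨p, hpV, fun hpZ => hp0 (inner_self_eq_zero.1 (hpo p ⟨hpZ, hpV⟩)), ?_⟩
  rw [← Submodule.sup_orthogonal_inf_of_hasOrthogonalProjection (inf_le_left : Z ⊓ V ≤ Z),
    ← Submodule.inf_orthogonal]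
  exact ⟨fun u hu => hV.inner_map_eq_zero hB hu.2 hpV (hZ u hu.1), hBp⟩

theorem re_inner_smul_add_smul_left (s t : ℝ) (x y z : E) :
    RCLike.re ⟪(s : 𝕜) • x + (t : 𝕜) • y, z⟫_𝕜 =
      s * RCLike.re ⟪x, z⟫_𝕜 + t * RCLike.re ⟪y, z⟫_𝕜 := by
  simp [inner_add_left, inner_smul_left]

theorem exists_isotropic_notMem (hB : B.IsSymmetric) {p n : E} (hpZ : p ∉ Z) (hnZ : n ∉ Z)
    (hBp : B p ∈ Zᗮ) (hBn : B n ∈ Zᗮ) (hp : 0 ≤ RCLike.re ⟪p, B p⟫_𝕜)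
    (hn : RCLike.re ⟪n, B n⟫_𝕜 ≤ 0) :
    ∃ w ∉ Z, B w ∈ Zᗮ ∧ ⟪w, B w⟫_𝕜 = 0 := by
  set a := RCLike.re ⟪p, B p⟫_𝕜 with ha
  set b := RCLike.re ⟪n, B n⟫_𝕜 with hb
  set c := RCLike.re ⟪p, B n⟫_𝕜
  have hsymm (x y : E) : RCLike.re ⟪x, B y⟫_𝕜 = RCLike.re ⟪y, B x⟫_𝕜 := by
    rw [← hB, inner_re_symm]
  rcases hp.eq_or_lt with ha0 | ha0
  · refine ⟨p, hpZ, hBp, ?_⟩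
    rw [← hB.coe_re_inner_self_apply, ← ha, ← ha0, RCLike.ofReal_zero]
  -- By the intermediate value theorem, the segment from `p` to `n` contains an isotropic vector.
  let w (t : ℝ) : E := ((1 - t : ℝ) : 𝕜) • p + (t : 𝕜) • n
  have hwp (t : ℝ) : RCLike.re ⟪w t, B p⟫_𝕜 = (1 - t) * a + t * c := by
    rw [re_inner_smul_add_smul_left, hsymm n p]
  have hwn (t : ℝ) : RCLike.re ⟪w t, B n⟫_𝕜 = (1 - t) * c + t * b :=
    re_inner_smul_add_smul_left ..
  have hww (t : ℝ) : RCLike.re ⟪w t, B (w t)⟫_𝕜 =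
      (1 - t) * ((1 - t) * a + t * c) + t * ((1 - t) * c + t * b) := by
    rw [← hwp, ← hwn, ← hsymm p, ← hsymm n]
    exact re_inner_smul_add_smul_left ..
  obtain ⟨t, ⟨ht0, ht1⟩, ht⟩ : ∃ t ∈ Set.Icc (0 : ℝ) 1,
      RCLike.re ⟪w t, B (w t)⟫_𝕜 = 0 := by
    refine intermediate_value_Icc' zero_le_one ?_ ?_
    · simp only [hww]; fun_prop
    · simpa [w, ← ha, ← hb] using ⟨hn, hp⟩
  refine ⟨w t, fun hwZ => ?_, ?_, by rw [← hB.coe_re_inner_self_apply, ht, RCLike.ofReal_zero]⟩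
  · have h1 : (1 - t) * a + t * c = 0 := by rw [← hwp, hBp _ hwZ, map_zero]
    have h2 : (1 - t) * c + t * b = 0 := by rw [← hwn, hBn _ hwZ, map_zero]
    rcases ht1.eq_or_lt with rfl | ht1
    · exact hnZ (by simpa [w] using hwZ)
    · have hc0 : c < 0 := by nlinarith
      nlinarith
  · simpa [w] using Zᗮ.add_mem (Zᗮ.smul_mem _ hBp) (Zᗮ.smul_mem _ hBn)

theorem IsIsotropicOn.sup_span_singleton (hB : B.IsSymmetric) (hZ : IsIsotropicOn B Z) {w : E}
    (hBw : B w ∈ Zᗮ) (hw : ⟪w, B w⟫_𝕜 = 0) : IsIsotropicOn B (Z ⊔ Submodule.span 𝕜 {w}) := by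
  intro x hx
  obtain ⟨z, hz, v, hv, rfl⟩ := Submodule.mem_sup.1 hx
  obtain ⟨c, rfl⟩ := Submodule.mem_span_singleton.1 hv
  have hwz : ⟪w, B z⟫_𝕜 = 0 := by rw [← hB, inner_eq_zero_symm, hBw z hz]
  simp [inner_add_left, inner_add_right, inner_smul_left, inner_smul_right, hwz, hw, hBw z hz,
    hZ z hz]

theorem IsNonnegOn.exists_isIsotropicOn_rank_eq [FiniteDimensional 𝕜 V] [FiniteDimensional 𝕜 V']
    (hB : B.IsSymmetric) (hV : IsNonnegOn B V) (hV' : IsNonnegOn (-B) V') {k : ℕ}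
    (hk : k ≤ Module.finrank 𝕜 V) (hk' : k ≤ Module.finrank 𝕜 V') :
    ∃ Z : Submodule 𝕜 E, Module.rank 𝕜 Z = k ∧ IsIsotropicOn B Z := by
  induction k with
  | zero => exact ⟨⊥, by simp, by simp [IsIsotropicOn]⟩
  | succ k ih =>
    obtain ⟨Z, hZk, hZ⟩ := ih (Nat.le_of_succ_le hk) (Nat.le_of_succ_le hk')
    have := Module.finite_of_rank_eq_nat hZk
    have hfinrank := Module.finrank_eq_of_rank_eq hZk
    obtain ⟨p, hpV, hpZ, hBp⟩ :=
      hV.exists_mem_notMem_map_mem_orthogonal hB hZ (hfinrank ▸ hk)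
    obtain ⟨n, hnV', hnZ, hBn⟩ := hV'.exists_mem_notMem_map_mem_orthogonal
      (fun x y => by simp [hB x y])
      (Z := Z) (fun x hx => by simp [hZ x hx]) (hfinrank ▸ hk')
    obtain ⟨w, hwZ, hBw, hw⟩ := exists_isotropic_notMem hB hpZ hnZ hBp
      (by simpa using hBn) (hV p hpV) (by simpa using hV' n hnV')
    exact ⟨_, by rw [rank_sup_span_singleton hwZ, hZk, Nat.cast_succ],
      hZ.sup_span_singleton hB hBw hw⟩

theorem exists_mem_ne_zero_norm_starProjection_le {U W X : Submodule 𝕜 E} [FiniteDimensional 𝕜 U]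
    [FiniteDimensional 𝕜 W] [FiniteDimensional 𝕜 X] (hUW : U ≤ W ∨ W ≤ U) (hX : X ≠ ⊥)
    (h : Module.finrank 𝕜 W < Module.finrank 𝕜 U + Module.finrank 𝕜 X) :
    ∃ x ∈ X, x ≠ 0 ∧ ‖W.starProjection x‖ ≤ ‖U.starProjection x‖ := by
  rcases hUW with hUW | hWU
  -- A dimension count makes `(P_W - P_U) x ∈ W ⊓ Uᗮ` orthogonal to `W ⊓ Uᗮ`, hence zero.
  · have hdim := Submodule.finrank_add_inf_finrank_orthogonal hUW
    obtain ⟨x, hxX, hx0, hx⟩ := exists_mem_ne_zero_map_mem_orthogonal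
      ((W.starProjection - U.starProjection : E →L[𝕜] E) : E →ₗ[𝕜] E) (W := Uᗮ ⊓ W) (X := X)
      (by lia)
    have hxW : W.starProjection x - U.starProjection x ∈ W :=
      W.sub_mem (W.starProjection_apply_mem x) (hUW (U.starProjection_apply_mem x))
    have hxU : W.starProjection x - U.starProjection x ∈ Uᗮ := by
      have := Uᗮ.sub_mem (U.sub_starProjection_mem_orthogonal x)
        (Submodule.orthogonal_le hUW (W.sub_starProjection_mem_orthogonal x))
      simpa using this
    refine ⟨x, hxX, hx0, (congrArg norm (sub_eq_zero.1 ?_)).le⟩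
    exact inner_self_eq_zero.1 (hx _ ⟨hxU, hxW⟩)
  · obtain ⟨x, hxX, hx0⟩ := X.ne_bot_iff.1 hX
    refine ⟨x, hxX, hx0, ?_⟩
    have hcomp := Submodule.starProjection_comp_starProjection_of_le hWU
    rw [← hcomp]
    exact W.norm_starProjection_apply_le _

theorem inner_map_add_self_of_mem_orthogonal (hB : B.IsSymmetric) (hBV : ∀ x ∈ V, B x ∈ V)
    {x y : E} (hx : x ∈ Vᗮ) (hy : y ∈ V) :
    ⟪x + y, B (x + y)⟫_𝕜 = ⟪x, B x⟫_𝕜 + ⟪y, B y⟫_𝕜 := by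
  have hBy_x : ⟪B y, x⟫_𝕜 = 0 := hx _ (hBV y hy)
  rw [map_add, inner_add_left, inner_add_right, inner_add_right, inner_eq_zero_symm.1 hBy_x,
    ← hB y x, hBy_x, add_zero, zero_add]

end HermitianForm

section SelfAdjoint

variable {A B : H →L[ℂ] H}

theorem re_inner_sub_smul_one_apply {E : Type*} [NormedAddCommGroup E] [InnerProductSpace ℂ E]
    (T : E →L[ℂ] E) (t : ℝ) (x : E) :
    (⟪x, (T - (t : ℂ) • (1 : E →L[ℂ] E)) x⟫_ℂ).re = (⟪x, T x⟫_ℂ).re - t * ‖x‖ ^ 2 := by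
  simp [inner_self_eq_norm_sq_to_K, ← ofReal_pow]

theorem isSelfAdjoint_sub_ofReal_smul_one (hA : IsSelfAdjoint A) (t : ℝ) :
    IsSelfAdjoint (A - (t : ℂ) • (1 : H →L[ℂ] H)) :=
  hA.sub (IsSelfAdjoint.smul (conj_ofReal t) (IsSelfAdjoint.one _))

theorem exists_nonneg_spectral_subspace (hB : IsSelfAdjoint B) :
    ∃ E : Submodule ℂ H, IsNonnegOn (B : H →ₗ[ℂ] H) E ∧ (∀ x ∈ E, B x ∈ E) ∧
      ∀ x ∈ Eᗮ, x ≠ 0 → (⟪x, B x⟫_ℂ).re < 0 := by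
  have hpos : (B⁺).IsPositive :=
    (ContinuousLinearMap.nonneg_iff_isPositive _).1 (CFC.posPart_nonneg B)
  have hneg : (B⁻).IsPositive :=
    (ContinuousLinearMap.nonneg_iff_isPositive _).1 (CFC.negPart_nonneg B)
  have hB_apply (x : H) : B x = B⁺ x - B⁻ x :=
    congrArg (fun T : H →L[ℂ] H => T x) (CFC.posPart_sub_negPart B hB).symm
  have hposE (x : H) : B⁻ (B⁺ x) = 0 :=
    congrArg (fun T : H →L[ℂ] H => T x) (CFC.negPart_mul_posPart B)
  have hB_ker {x : H} (hx : B⁻ x = 0) : B x = B⁺ x := by rw [hB_apply, hx, sub_zero]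
  refine ⟨LinearMap.ker ((B⁻ : H →L[ℂ] H) : H →ₗ[ℂ] H), fun x (hx : B⁻ x = 0) => ?_,
    fun x (hx : B⁻ x = 0) => ?_, fun x hx hx0 => ?_⟩
  · rw [ContinuousLinearMap.coe_coe, hB_ker hx]
    exact hpos.re_inner_nonneg_right x
  · rw [hB_ker hx]
    exact hposE x
  · have hposx : ⟪x, B⁺ x⟫_ℂ = 0 := inner_eq_zero_symm.1 (hx (B⁺ x) (hposE x))
    rw [hB_apply, inner_sub_right, hposx, zero_sub, neg_re, neg_lt_zero]
    refine (hneg.re_inner_nonneg_right x).lt_of_ne fun hx_re => hx0 ?_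
    have hx_inner : ⟪x, B⁻ x⟫_ℂ = 0 := by
      simpa [← hx_re] using (hneg.isSymmetric.coe_re_inner_self_apply x).symm
    have hnonneg : IsNonnegOn ((B⁻ : H →L[ℂ] H) : H →ₗ[ℂ] H) ⊤ :=
      fun y _ => hneg.re_inner_nonneg_right y
    have hx_ker : B⁻ x = 0 := by
      rw [← inner_self_eq_zero (𝕜 := ℂ), hneg.inner_left_eq_inner_right]
      exact hnonneg.inner_map_eq_zero hneg.isSymmetric trivial trivial hx_inner
    exact inner_self_eq_zero.1 (hx x hx_ker)

theorem exists_isNonnegOn_rank_eq (hB : IsSelfAdjoint B) {c : ℝ} (hc : 0 ≤ c)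
    (hBc : ∀ x ≠ 0, (⟪x, B x⟫_ℂ).re < c * ‖x‖ ^ 2) {r m : ℕ} (hm : m ≠ 0)
    (hrm : ((r + m : ℕ) : Cardinal) ≤ Module.rank ℂ H)
    (h : ∀ (U : Submodule ℂ H) [FiniteDimensional ℂ U], Module.rank ℂ U = r →
      ∃ X : Submodule ℂ H, Module.rank ℂ X = m ∧
        ∀ x ∈ X, c * ‖U.starProjection x‖ ^ 2 ≤ (⟪x, B x⟫_ℂ).re) :
    ∃ V : Submodule ℂ H, Module.rank ℂ V = (r + m : ℕ) ∧ IsNonnegOn (B : H →ₗ[ℂ] H) V := by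
  obtain ⟨E, hE, hBE, hEperp⟩ := exists_nonneg_spectral_subspace hB
  rcases le_or_gt ((r + m : ℕ) : Cardinal) (Module.rank ℂ E) with hrank | hrank
  · obtain ⟨V, hVE, hV⟩ := exists_submodule_le_rank_eq hrank
    exact ⟨V, hV, fun x hx => hE x (hVE hx)⟩
  exfalso
  have : FiniteDimensional ℂ E :=
    Module.rank_lt_aleph0_iff.1 (hrank.trans Cardinal.natCast_lt_aleph0)
  obtain ⟨U, hU, hUE⟩ := exists_comparable_submodule_rank_eq E
    ((Nat.cast_le.2 (Nat.le_add_right r m)).trans hrm)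
  have := Module.finite_of_rank_eq_nat hU
  obtain ⟨X, hX, hXq⟩ := h U hU
  have := Module.finite_of_rank_eq_nat hX
  obtain ⟨x, hxX, hx0, hxUE⟩ := exists_mem_ne_zero_norm_starProjection_le hUE (X := X)
    (by rintro rfl; exact hm (by simpa using hX.symm))
    (by rwa [Module.finrank_eq_of_rank_eq hU, Module.finrank_eq_of_rank_eq hX,
      ← Nat.cast_lt (α := Cardinal), Module.finrank_eq_rank])
  set e := E.starProjection x
  set y := x - e with hy
  have heE : e ∈ E := E.starProjection_apply_mem x
  have hyE : y ∈ Eᗮ := E.sub_starProjection_mem_orthogonal x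
  have hsplit : (⟪x, B x⟫_ℂ).re = (⟪y, B y⟫_ℂ).re + (⟪e, B e⟫_ℂ).re := by
    have := congrArg re (inner_map_add_self_of_mem_orthogonal hB.isSymmetric hBE hyE heE)
    rwa [hy, sub_add_cancel, ← hy, add_re] at this
  have hle : c * ‖e‖ ^ 2 ≤ (⟪y, B y⟫_ℂ).re + (⟪e, B e⟫_ℂ).re := by
    rw [← hsplit]
    refine le_trans ?_ (hXq x hxX)
    gcongr
  rcases eq_or_ne y 0 with hy0 | hy0
  · have hxe : e = x := (sub_eq_zero.1 hy0).symm
    rw [hy0, inner_zero_left, zero_re, zero_add, hxe] at hle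
    exact (hBc x hx0).not_ge hle
  · have hye := hEperp y hyE hy0
    rcases eq_or_ne e 0 with he0 | he0
    · simp only [he0, norm_zero, inner_zero_left, zero_re] at hle
      linarith
    · linarith [hBc e he0]

end SelfAdjoint

section RankKRange

variable {A P T : H →L[ℂ] H}

theorem isOrthProj_starProjection (U : Submodule ℂ H) [U.HasOrthogonalProjection] :
    IsOrthProj U.starProjection :=
  ⟨isSelfAdjoint_starProjection U, U.isIdempotentElem_starProjection⟩

theorem opRank_starProjection {E : Type*} [NormedAddCommGroup E] [InnerProductSpace ℂ E]
    (U : Submodule ℂ E) [U.HasOrthogonalProjection] :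
    opRank U.starProjection = Module.rank ℂ U := by
  rw [opRank, U.range_starProjection]

theorem exists_isOrthProj_opRank_eq {n : ℕ} (hn : (n : Cardinal) ≤ Module.rank ℂ H) :
    ∃ P : H →L[ℂ] H, IsOrthProj P ∧ opRank P = n := by
  obtain ⟨U, -, hU⟩ := exists_submodule_le_rank_eq (hn.trans_eq (rank_top ℂ H).symm)
  have := Module.finite_of_rank_eq_nat hU
  exact ⟨_, isOrthProj_starProjection U, (opRank_starProjection U).trans hU⟩

theorem IsOrthProj.comp_comp_eq_smul_iff (hP : IsOrthProj P) {lam : ℂ} :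
    P ∘L A ∘L P = lam • P ↔ IsIsotropicOn ((A - lam • 1 : H →L[ℂ] H) : H →ₗ[ℂ] H)
      (LinearMap.range (P : H →ₗ[ℂ] H)) := by
  have hPP (x : H) : P (P x) = P x := congrArg (fun T : H →L[ℂ] H => T x) hP.2
  have hinner (x : H) : ⟪(P ∘L A ∘L P - lam • P) x, x⟫_ℂ = ⟪(A - lam • 1) (P x), P x⟫_ℂ := by
    have hsymm : ⟪P ((A - lam • 1) (P x)), x⟫_ℂ = ⟪(A - lam • 1) (P x), P x⟫_ℂ :=
      hP.1.isSymmetric _ _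
    rw [← hsymm]
    simp [hPP]
  rw [← sub_eq_zero, ← ContinuousLinearMap.coe_inj, ContinuousLinearMap.toLinearMap_zero,
    ← inner_map_self_eq_zero]
  simp only [ContinuousLinearMap.coe_coe, hinner, IsIsotropicOn, LinearMap.mem_range,
    forall_exists_index, forall_apply_eq_imp_iff]
  exact forall_congr' fun x => inner_eq_zero_symm

theorem mem_rankKRange_iff {k : ℕ} {lam : ℂ} :
    lam ∈ rankKRange k A ↔ ∃ V : Submodule ℂ H, Module.rank ℂ V = k ∧
      IsIsotropicOn ((A - lam • 1 : H →L[ℂ] H) : H →ₗ[ℂ] H) V := by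
  constructor
  · rintro ⟨P, hP, hrank, hPA⟩
    exact ⟨_, hrank, hP.comp_comp_eq_smul_iff.1 hPA⟩
  · rintro ⟨V, hrank, hV⟩
    have := Module.finite_of_rank_eq_nat hrank
    refine ⟨V.starProjection, isOrthProj_starProjection V,
      (opRank_starProjection V).trans hrank, ?_⟩
    rwa [(isOrthProj_starProjection V).comp_comp_eq_smul_iff, V.range_starProjection]

theorem neg_mem_rankKRange_neg {k : ℕ} {lam : ℂ} (h : lam ∈ rankKRange k A) :
    -lam ∈ rankKRange k (-A) := by
  obtain ⟨P, hP, hrank, hPA⟩ := h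
  exact ⟨P, hP, hrank, by simp [hPA]⟩

theorem mem_rankKRange_add_of_opRank_le {F : H →L[ℂ] H} {r m : ℕ} {lam : ℂ} (hF : opRank F ≤ r)
    (h : lam ∈ rankKRange (r + m) A) : lam ∈ rankKRange m (A + F) := by
  rw [mem_rankKRange_iff] at h ⊢
  obtain ⟨V, hVrank, hV⟩ := h
  obtain ⟨U, hUV, hU⟩ := exists_submodule_le_rank_eq (le_rank_inf_ker_of_rank_range_le hF hVrank)
  refine ⟨U, hU, fun x hx => ?_⟩
  obtain ⟨hxV, hFx : F x = 0⟩ := hUV hx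
  simpa [hFx] using hV x hxV

theorem conj_eq_of_mem_rankKRange (hT : IsSelfAdjoint T) {m : ℕ} (hm : m ≠ 0) {lam : ℂ}
    (h : lam ∈ rankKRange m T) : (starRingEnd ℂ) lam = lam := by
  obtain ⟨X, hX, hiso⟩ := mem_rankKRange_iff.1 h
  have hXbot : X ≠ ⊥ := by
    rintro rfl
    exact hm (by simpa using hX.symm)
  obtain ⟨x, hxX, hx0⟩ := X.ne_bot_iff.1 hXbot
  have hTx : ⟪x, T x⟫_ℂ = lam * ⟪x, x⟫_ℂ := by
    simpa [inner_sub_right, inner_smul_right, sub_eq_zero] using hiso x hxX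
  have hconj : (starRingEnd ℂ) ⟪x, T x⟫_ℂ = ⟪x, T x⟫_ℂ :=
    (inner_conj_symm _ _).trans (hT.isSymmetric x x)
  rw [hTx, map_mul, inner_conj_symm] at hconj
  exact mul_right_cancel₀ (inner_self_ne_zero.2 hx0) hconj

theorem exists_isNonnegOn_of_forall_mem_rankKRange (hA : IsSelfAdjoint A) {t : ℝ} {r m : ℕ}
    (hm : m ≠ 0) (hrm : ((r + m : ℕ) : Cardinal) ≤ Module.rank ℂ H)
    (h : ∀ P : H →L[ℂ] H, IsOrthProj P → opRank P = r →
      (t : ℂ) ∈ rankKRange m (A + (-((2 * ‖A‖ : ℝ) : ℂ)) • P)) :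
    ∃ V : Submodule ℂ H, Module.rank ℂ V = (r + m : ℕ) ∧
      IsNonnegOn ((A - (t : ℂ) • 1 : H →L[ℂ] H) : H →ₗ[ℂ] H) V := by
  have hbound (x : H) : |(⟪x, A x⟫_ℂ).re| ≤ ‖A‖ * ‖x‖ ^ 2 := by
    calc |(⟪x, A x⟫_ℂ).re| ≤ ‖⟪x, A x⟫_ℂ‖ := abs_re_le_norm _
      _ ≤ ‖x‖ * ‖A x‖ := norm_inner_le_norm _ _
      _ ≤ ‖x‖ * (‖A‖ * ‖x‖) := by gcongr; exact A.le_opNorm x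
      _ = ‖A‖ * ‖x‖ ^ 2 := by ring
  rcases le_or_gt t (-‖A‖) with ht | ht
  · obtain ⟨V, -, hV⟩ := exists_submodule_le_rank_eq (hrm.trans_eq (rank_top ℂ H).symm)
    refine ⟨V, hV, fun x _ => (re_inner_sub_smul_one_apply A t x).ge.trans' ?_⟩
    nlinarith [neg_le_of_abs_le (hbound x), sq_nonneg ‖x‖]
  refine exists_isNonnegOn_rank_eq (isSelfAdjoint_sub_ofReal_smul_one hA t) (c := 2 * ‖A‖)
    (by positivity) (fun x hx => ?_) hm hrm fun U _ hU => ?_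
  · have : 0 < ‖x‖ ^ 2 := by positivity
    rw [re_inner_sub_smul_one_apply]
    nlinarith [le_of_abs_le (hbound x)]
  · obtain ⟨X, hX, hiso⟩ := mem_rankKRange_iff.1
      (h _ (isOrthProj_starProjection U) ((opRank_starProjection U).trans hU))
    refine ⟨X, hX, fun x hx => ?_⟩
    have hperturbed : (⟪x, (A + (-((2 * ‖A‖ : ℝ) : ℂ)) • U.starProjection) x⟫_ℂ).re =
        (⟪x, A x⟫_ℂ).re - 2 * ‖A‖ * ‖U.starProjection x‖ ^ 2 := by
      have hUx : (⟪x, U.starProjection x⟫_ℂ).re = ‖U.starProjection x‖ ^ 2 := by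
        rw [← U.inner_starProjection_left_eq_right]
        exact U.re_inner_starProjection_eq_normSq x
      simp [inner_smul_right, hUx, sub_eq_add_neg]
    have hzero := congrArg re (hiso x hx)
    rw [ContinuousLinearMap.coe_coe, re_inner_sub_smul_one_apply, hperturbed, zero_re] at hzero
    rw [re_inner_sub_smul_one_apply]
    linarith

end RankKRange

/-- For a self-adjoint operator `A`, `1 ≤ r < k ≤ dim ℋ`, and any collection `𝒮` of
operators of rank at most `r` containing `{±2‖A‖P : P a rank-r orthogonal projection}`,
`Λ_k(A)` is the intersection of the sets `Λ_{k-r}(A+F)` for `F ∈ 𝒮`. -/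
theorem rankKRange_eq_iInter_perturbed_selfAdjoint
    (A : H →L[ℂ] H) (hA : IsSelfAdjoint A)
    (r k : ℕ) (hr : 1 ≤ r) (hrk : r < k) (hk : (k : Cardinal) ≤ Module.rank ℂ H)
    (S : Set (H →L[ℂ] H))
    (hSrank : ∀ F ∈ S, opRank F ≤ r)
    (hS0 : ∀ P : H →L[ℂ] H, IsOrthProj P → opRank P = r →
      ((2 * ‖A‖ : ℝ) : ℂ) • P ∈ S ∧ (-((2 * ‖A‖ : ℝ) : ℂ)) • P ∈ S) :
    rankKRange k A = ⋂ F ∈ S, rankKRange (k - r) (A + F) := by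
  obtain ⟨m, rfl⟩ := Nat.exists_eq_add_of_le hrk.le
  have hm : m ≠ 0 := by lia
  rw [Nat.add_sub_cancel_left]
  refine Set.Subset.antisymm (fun lam hlam => Set.mem_iInter₂.2 fun F hF =>
    mem_rankKRange_add_of_opRank_le (hSrank F hF) hlam) fun lam hlam => ?_
  rw [Set.mem_iInter₂] at hlam
  obtain ⟨t, rfl⟩ : ∃ t : ℝ, lam = t := by
    obtain ⟨P, hP, hPr⟩ := exists_isOrthProj_opRank_eq ((Nat.cast_le.2 hrk.le).trans hk)
    have hsa := hA.add (IsSelfAdjoint.smul (conj_ofReal (2 * ‖A‖)) hP.1)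
    exact conj_eq_iff_real.1 (conj_eq_of_mem_rankKRange hsa hm (hlam _ (hS0 P hP hPr).1))
  obtain ⟨V, hVrank, hV⟩ := exists_isNonnegOn_of_forall_mem_rankKRange hA hm hk
    fun P hP hPr => hlam _ (hS0 P hP hPr).2
  obtain ⟨V', hVrank', hV'⟩ := exists_isNonnegOn_of_forall_mem_rankKRange (t := -t) hA.neg hm hk
    fun P hP hPr => by simpa [add_comm] using neg_mem_rankKRange_neg (hlam _ (hS0 P hP hPr).1)
  have := Module.finite_of_rank_eq_nat hVrank
  have := Module.finite_of_rank_eq_nat hVrank'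
  have hB := (isSelfAdjoint_sub_ofReal_smul_one hA t).isSymmetric
  have hnonpos : IsNonnegOn (-((A - (t : ℂ) • 1 : H →L[ℂ] H) : H →ₗ[ℂ] H)) V' :=
    fun x hx => by simpa [neg_add_eq_sub] using hV' x hx
  exact mem_rankKRange_iff.2 (hV.exists_isIsotropicOn_rank_eq hB hnonpos
    (Module.finrank_eq_of_rank_eq hVrank).ge (Module.finrank_eq_of_rank_eq hVrank').ge)
end
end

section
/- Let ℋ be an infinite-dimensional complex Hilbert space and A ∈ B(ℋ). Let 𝒮 be any set of finite-rank operators on ℋ containing {2e^{iξ}‖A‖P : ξ ∈ [0,2π), P a finite-rank orthogonal projection on ℋ}. Then Ω_∞(A) = ⋂_{k ≥ 1} Ω_k(A) = ⋂{Cl(W(A+F)) : F ∈ 𝒮} = W_e(A), where Cl denotes closure. -/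
noncomputable section

open scoped InnerProductSpace
open Complex

variable {H : Type*} [NormedAddCommGroup H] [InnerProductSpace ℂ H] [CompleteSpace H]

/-- The set `Ω_∞(A)`. -/
def omegaInf (A : H →L[ℂ] H) : Set ℂ :=
  { μ | ∀ ξ ∈ Set.Ico (0 : ℝ) (2 * Real.pi), ∀ k : ℕ, 1 ≤ k →
      (Complex.exp (ξ * Complex.I) * μ).re ≤
        lambdaSA k (reOp (Complex.exp (ξ * Complex.I) • A)) }

/-- The essential numerical range `W_e(A)`. -/
def essNumRange (A : H →L[ℂ] H) : Set ℂ :=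
  ⋂ F ∈ {F : H →L[ℂ] H | opRank F < Cardinal.aleph0}, closure (numRange (A + F))

/-!
Write `λ_k(ξ) = λ_k(Re(e^{iξ}A))`. By Toeplitz–Hausdorff, `Cl(W(A + F))` is the intersection of its
supporting half-planes `Re(e^{iξ}z) ≤ c`. If `rank F < k`, every `k`-dimensional subspace meets
`ker F`, where `A + F` and `A` agree; hence `λ_k(ξ) ≤ c`, which gives `Ω_∞(A) ⊆ W_e(A)`.

Conversely, for `c > λ_k(ξ)` the positive part of `T - c`, `T = Re(e^{iξ}A)`, has rank less than
`k`, because `T ≥ c` on its range. With `P` the projection onto that range,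
`T - c ≤ P(T - c)P ≤ 2‖A‖P`, so the perturbation `-2e^{-iξ}‖A‖P` pushes `W(A)` into the
half-plane `Re(e^{iξ}z) ≤ c`.
-/

section HalfPlanes

lemma exists_mem_Ico_exp_mul_I_eq {w : ℂ} (hw : ‖w‖ = 1) :
    ∃ ξ ∈ Set.Ico (0 : ℝ) (2 * Real.pi), exp (ξ * I) = w := by
  obtain ⟨θ, rfl⟩ := (Complex.norm_eq_one_iff w).mp hw
  obtain ⟨ξ, hξ, h⟩ := Circle.periodic_exp.exists_mem_Ico₀ Real.two_pi_pos θ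
  exact ⟨ξ, hξ, by simpa only [Circle.coe_exp] using (congrArg ((↑) : Circle → ℂ) h).symm⟩

lemma re_mul_le_of_mem_closure {s : Set ℂ} {w μ : ℂ} {c : ℝ} (hs : ∀ z ∈ s, (w * z).re ≤ c)
    (hμ : μ ∈ closure s) : (w * μ).re ≤ c :=
  closure_minimal (t := {z | (w * z).re ≤ c}) hs (isClosed_le (by fun_prop) continuous_const) hμ

lemma mem_closure_of_forall_re_exp_mul_le {s : Set ℂ} (hs : Convex ℝ s) {μ : ℂ}
    (h : ∀ ξ ∈ Set.Ico (0 : ℝ) (2 * Real.pi), ∀ c : ℝ,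
      (∀ z ∈ s, (exp (ξ * I) * z).re ≤ c) → (exp (ξ * I) * μ).re ≤ c) :
    μ ∈ closure s := by
  by_contra hμ
  obtain ⟨f, u, hfs, hfμ⟩ :=
    RCLike.geometric_hahn_banach_closed_point (𝕜 := ℂ) hs.closure isClosed_closure hμ
  obtain ⟨w, hw, hf⟩ := Complex.exists_norm_mul_eq_self (f 1)
  obtain ⟨ξ, hξ, rfl⟩ := exists_mem_Ico_exp_mul_I_eq hw
  have re_f (z : ℂ) : (f z).re = ‖f 1‖ * (exp (ξ * I) * z).re := by
    have : f z = ‖f 1‖ * (exp (ξ * I) * z) := by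
      rw [← mul_assoc, mul_comm (‖f 1‖ : ℂ), hf, mul_comm, ← smul_eq_mul, ← map_smul,
        smul_eq_mul, mul_one]
    rw [this, Complex.re_ofReal_mul]
  have hfs' : ∀ z ∈ s, ‖f 1‖ * (exp (ξ * I) * z).re < u := fun z hz =>
    re_f z ▸ hfs z (subset_closure hz)
  have hfμ' : u < ‖f 1‖ * (exp (ξ * I) * μ).re := re_f μ ▸ hfμ
  rcases (norm_nonneg (f 1)).eq_or_lt with hf0 | hf0
  · have := h ξ hξ ((exp (ξ * I) * μ).re - 1) fun z hz => by
      have := hfs' z hz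
      rw [← hf0, zero_mul] at this hfμ'
      linarith
    linarith
  · have := h ξ hξ (u / ‖f 1‖) fun z hz => (le_div_iff₀' hf0).mpr (hfs' z hz).le
    exact hfμ'.not_ge ((le_div_iff₀' hf0).mp this)

end HalfPlanes

section Subspaces

lemma exists_submodule_le_finrank_eq {K E : Type*} [DivisionRing K] [AddCommGroup E] [Module K E]
    {W : Submodule K E} {k : ℕ} (hk : k ≤ Module.rank K W) :
    ∃ V ≤ W, Module.finrank K V = k := by
  obtain ⟨f, hf⟩ := Module.le_rank_iff_exists_linearMap.mp hk
  refine ⟨LinearMap.range (W.subtype ∘ₗ f), ?_, ?_⟩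
  · rintro _ ⟨v, rfl⟩
    exact (f v).2
  · rw [LinearMap.finrank_range_of_inj (f := W.subtype ∘ₗ f) (W.injective_subtype.comp hf),
      Module.finrank_fin_fun]

lemma exists_submodule_finrank_eq {K E : Type*} [DivisionRing K] [AddCommGroup E] [Module K E]
    (hE : ¬ FiniteDimensional K E) (k : ℕ) : ∃ V : Submodule K E, Module.finrank K V = k := by
  have hk : (k : Cardinal) ≤ Module.rank K (⊤ : Submodule K E) := by
    rw [rank_top]
    exact Cardinal.natCast_le_aleph0.trans (not_lt.mp (mt Module.rank_lt_aleph0_iff.mp hE))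
  obtain ⟨V, -, hV⟩ := exists_submodule_le_finrank_eq hk
  exact ⟨V, hV⟩

variable {𝕜 E : Type*} [RCLike 𝕜] [NormedAddCommGroup E] [NormedSpace 𝕜 E]

lemma exists_mem_norm_eq_one {V : Submodule 𝕜 E} (hV : V ≠ ⊥) : ∃ x ∈ V, ‖x‖ = 1 := by
  obtain ⟨x, hxV, hx⟩ := V.exists_mem_ne_zero_of_ne_bot hV
  exact ⟨_, V.smul_mem _ hxV, norm_smul_inv_norm (𝕜 := 𝕜) hx⟩

lemma exists_mem_norm_eq_one_map_eq_zero {M : Type*} [AddCommGroup M] [Module 𝕜 M]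
    {F : E →ₗ[𝕜] M} [FiniteDimensional 𝕜 (LinearMap.range F)] {V : Submodule 𝕜 E}
    (hV : Module.finrank 𝕜 (LinearMap.range F) < Module.finrank 𝕜 V) :
    ∃ x ∈ V, ‖x‖ = 1 ∧ F x = 0 := by
  have : FiniteDimensional 𝕜 V := Module.finite_of_finrank_pos (Nat.zero_lt_of_lt hV)
  obtain ⟨x, hx, hx1⟩ := exists_mem_norm_eq_one (E := V)
    (LinearMap.ker_ne_bot_of_finrank_lt (f := F.rangeRestrict ∘ₗ V.subtype) hV)
  exact ⟨x, x.2, hx1, congrArg Subtype.val hx⟩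

end Subspaces

section ToeplitzHausdorff

variable {E : Type*} [NormedAddCommGroup E] [InnerProductSpace ℂ E]

lemma exists_norm_eq_one_im_mul_add_conj_mul_eq_zero (p q : ℂ) :
    ∃ θ : ℂ, ‖θ‖ = 1 ∧ (θ * p + starRingEnd ℂ θ * q).im = 0 := by
  obtain ⟨θ, hθ, h⟩ := Complex.exists_norm_eq_mul_self (p - starRingEnd ℂ q)
  refine ⟨θ, hθ, ?_⟩
  have him : (θ * (p - starRingEnd ℂ q)).im = 0 := by rw [← h, ofReal_im]
  simp only [mul_im, sub_re, sub_im, conj_re, conj_im, add_im] at him ⊢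
  linarith

lemma inner_smul_self_map_smul_self (T : E →L[ℂ] E) (a : ℂ) (x : E) :
    ⟪a • x, T (a • x)⟫_ℂ = (‖a‖ ^ 2 : ℝ) * ⟪x, T x⟫_ℂ := by
  rw [map_smul, inner_smul_left, inner_smul_right, ← mul_assoc, Complex.conj_mul', ofReal_pow]

lemma mem_numRange_of_inner_eq_mul_norm_sq {T : E →L[ℂ] E} {z : ℂ} {x : E} (hx : x ≠ 0)
    (h : ⟪x, T x⟫_ℂ = z * ‖x‖ ^ 2) : z ∈ numRange T := by
  have hx' : (‖x‖ : ℂ) ≠ 0 := ofReal_ne_zero.mpr (norm_ne_zero_iff.mpr hx)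
  refine ⟨(‖x‖⁻¹ : ℂ) • x, norm_smul_inv_norm hx, ?_⟩
  rw [inner_smul_self_map_smul_self, h, norm_inv, norm_real, norm_norm]
  push_cast
  field_simp

lemma numRange_smul_add_smul_one (T : E →L[ℂ] E) (a b : ℂ) :
    numRange (a • T + b • 1) = (fun z => a * z + b) '' numRange T := by
  have inner_eq (x : E) (hx : ‖x‖ = 1) :
      ⟪x, (a • T + b • (1 : E →L[ℂ] E)) x⟫_ℂ = a * ⟪x, T x⟫_ℂ + b := by
    simp [hx]
  ext z
  constructor
  · rintro ⟨x, hx, rfl⟩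
    exact ⟨_, ⟨x, hx, rfl⟩, (inner_eq x hx).symm⟩
  · rintro ⟨_, ⟨x, hx, rfl⟩, rfl⟩
    exact ⟨x, hx, inner_eq x hx⟩

lemma linearIndependent_pair_of_inner_map_self {T : E →L[ℂ] E} {x y : E} (hx : x ≠ 0)
    (hTx : ⟪x, T x⟫_ℂ = 0) (hTy : ⟪y, T y⟫_ℂ ≠ 0) : LinearIndependent ℂ ![x, y] := by
  rw [LinearIndependent.pair_iff' hx]
  rintro a rfl
  exact hTy (by rw [inner_smul_self_map_smul_self, hTx, mul_zero])

lemma ofReal_mem_numRange_of_im_inner_add_inner_eq_zero {T : E →L[ℂ] E} {x y : E} (hx : x ≠ 0)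
    (hTx : ⟪x, T x⟫_ℂ = 0) (hy : ‖y‖ = 1) (hTy : ⟪y, T y⟫_ℂ = 1)
    (him : (⟪x, T y⟫_ℂ + ⟪y, T x⟫_ℂ).im = 0) {t : ℝ} (ht : t ∈ Set.Icc 0 1) :
    (t : ℂ) ∈ numRange T := by
  let z : ℝ → E := fun s => ((1 - s : ℝ) : ℂ) • x + (s : ℂ) • y
  have z_cont : Continuous z := by fun_prop
  have z_ne_zero (s : ℝ) : z s ≠ 0 := by
    intro hs
    obtain ⟨h1, h2⟩ := LinearIndependent.pair_iff.mp
      (linearIndependent_pair_of_inner_map_self hx hTx (hTy ▸ one_ne_zero)) _ _ hs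
    rw [ofReal_eq_zero] at h1 h2
    linarith
  have norm_sq_ne_zero (s : ℝ) : ‖z s‖ ^ 2 ≠ 0 := pow_ne_zero 2 (norm_ne_zero_iff.mpr (z_ne_zero s))
  have im_inner (s : ℝ) : (⟪z s, T (z s)⟫_ℂ).im = 0 := by
    have : ⟪z s, T (z s)⟫_ℂ =
        (((1 - s) * s : ℝ) : ℂ) * (⟪x, T y⟫_ℂ + ⟪y, T x⟫_ℂ) + ((s * s : ℝ) : ℂ) := by
      simp only [z, map_add, map_smul, inner_add_left, inner_add_right, inner_smul_left,
        inner_smul_right, hTx, hTy, Complex.conj_ofReal]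
      push_cast
      ring
    rw [this, add_im, im_ofReal_mul, him, ofReal_im, mul_zero, add_zero]
  let q : ℝ → ℝ := fun s => (⟪z s, T (z s)⟫_ℂ).re / ‖z s‖ ^ 2
  have q_cont : Continuous q :=
    (Complex.continuous_re.comp (z_cont.inner (T.continuous.comp z_cont))).div (z_cont.norm.pow 2)
      norm_sq_ne_zero
  have q_zero : q 0 = 0 := by simp [q, z, hTx]
  have q_one : q 1 = 1 := by simp [q, z, hTy, hy]
  obtain ⟨s, -, hs⟩ : t ∈ q '' Set.Icc 0 1 :=
    intermediate_value_Icc zero_le_one q_cont.continuousOn (by rwa [q_zero, q_one])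
  refine mem_numRange_of_inner_eq_mul_norm_sq (z_ne_zero s) ?_
  have hre : (⟪z s, T (z s)⟫_ℂ).re = t * ‖z s‖ ^ 2 := (div_eq_iff (norm_sq_ne_zero s)).mp hs
  apply Complex.ext
  · rw [hre, ← ofReal_pow, ← ofReal_mul, ofReal_re]
  · rw [im_inner, ← ofReal_pow, ← ofReal_mul, ofReal_im]

lemma ofReal_mem_numRange_of_zero_mem_of_one_mem {T : E →L[ℂ] E} (h0 : 0 ∈ numRange T)
    (h1 : 1 ∈ numRange T) {t : ℝ} (ht : t ∈ Set.Icc 0 1) : (t : ℂ) ∈ numRange T := by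
  obtain ⟨x, hx, hTx⟩ := h0
  obtain ⟨y, hy, hTy⟩ := h1
  obtain ⟨θ, hθ, him⟩ := exists_norm_eq_one_im_mul_add_conj_mul_eq_zero ⟪x, T y⟫_ℂ ⟪y, T x⟫_ℂ
  -- Rotating `y` to make the cross terms real makes the quadratic form real along the segment.
  refine ofReal_mem_numRange_of_im_inner_add_inner_eq_zero (y := θ • y)
    (ne_zero_of_norm_ne_zero (hx ▸ one_ne_zero)) hTx ?_ ?_ ?_ ht
  · rw [norm_smul, hθ, hy, one_mul]
  · rw [inner_smul_self_map_smul_self, hθ, hTy, one_pow, ofReal_one, mul_one]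
  · rwa [map_smul, inner_smul_left, inner_smul_right]

theorem convex_numRange (T : E →L[ℂ] E) : Convex ℝ (numRange T) := by
  rw [convex_iff_segment_subset]
  intro a ha b hb
  rcases eq_or_ne a b with rfl | hab
  · rwa [segment_same, Set.singleton_subset_iff]
  have hba : b - a ≠ 0 := sub_ne_zero.mpr hab.symm
  set T' := (b - a)⁻¹ • T + (-((b - a)⁻¹ * a)) • (1 : E →L[ℂ] E)
  have hT' : numRange T' = (fun z => (b - a)⁻¹ * z + -((b - a)⁻¹ * a)) '' numRange T :=
    numRange_smul_add_smul_one T _ _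
  have h0 : 0 ∈ numRange T' := hT' ▸ ⟨a, ha, add_neg_cancel _⟩
  have h1 : 1 ∈ numRange T' := hT' ▸ ⟨b, hb, by field_simp; ring⟩
  rw [segment_eq_image']
  rintro _ ⟨t, ht, rfl⟩
  obtain ⟨z, hz, hzt⟩ := hT' ▸ ofReal_mem_numRange_of_zero_mem_of_one_mem h0 h1 ht
  have : a + t • (b - a) = z := by
    rw [real_smul, ← hzt]
    field_simp
    ring
  rwa [← this] at hz

end ToeplitzHausdorff

section RealPart

lemma reOp_eq_realPart (T : H →L[ℂ] H) : reOp T = realPart T := by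
  rw [realPart_apply_coe, reOp, ContinuousLinearMap.star_eq_adjoint]
  ext x
  simp [← Complex.coe_smul]

lemma isSelfAdjoint_reOp (T : H →L[ℂ] H) : IsSelfAdjoint (reOp T) :=
  reOp_eq_realPart T ▸ (realPart T).2

lemma norm_reOp_le (T : H →L[ℂ] H) : ‖reOp T‖ ≤ ‖T‖ :=
  reOp_eq_realPart T ▸ realPart.norm_le T

lemma re_inner_reOp (T : H →L[ℂ] H) (x : H) : (⟪x, reOp T x⟫_ℂ).re = (⟪x, T x⟫_ℂ).re := by
  have hadj : ⟪x, ContinuousLinearMap.adjoint T x⟫_ℂ = starRingEnd ℂ ⟪x, T x⟫_ℂ := by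
    rw [ContinuousLinearMap.adjoint_inner_right, inner_conj_symm]
  rw [reOp, smul_apply, add_apply, inner_smul_right, inner_add_right, hadj, add_conj]
  simp

end RealPart

section LambdaSA

variable {E : Type*} [NormedAddCommGroup E] [InnerProductSpace ℂ E] {T : E →L[ℂ] E} {k : ℕ} {c : ℝ}

lemma abs_re_inner_map_self_le_norm (T : E →L[ℂ] E) {x : E} (hx : ‖x‖ = 1) :
    |(⟪x, T x⟫_ℂ).re| ≤ ‖T‖ :=
  calc |(⟪x, T x⟫_ℂ).re| ≤ ‖⟪x, T x⟫_ℂ‖ := abs_re_le_norm _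
    _ ≤ ‖x‖ * ‖T x‖ := norm_inner_le_norm x (T x)
    _ ≤ ‖T‖ := by simpa only [hx, one_mul, mul_one] using T.le_opNorm x

lemma le_lambdaSA (hk : 1 ≤ k) {V : Submodule ℂ E} (hV : Module.finrank ℂ V = k)
    (hc : ∀ x ∈ V, ‖x‖ = 1 → c ≤ (⟪x, T x⟫_ℂ).re) : c ≤ lambdaSA k T := by
  refine le_csSup ⟨‖T‖, ?_⟩ ⟨V, hV, hc⟩
  rintro t ⟨W, hW, ht⟩
  have hW0 : W ≠ ⊥ := by
    rintro rfl
    rw [finrank_bot] at hW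
    omega
  obtain ⟨x, hxW, hx⟩ := exists_mem_norm_eq_one hW0
  exact (ht x hxW hx).trans (le_of_abs_le (abs_re_inner_map_self_le_norm T hx))

lemma neg_norm_le_lambdaSA (hE : ¬ FiniteDimensional ℂ E) (hk : 1 ≤ k) (T : E →L[ℂ] E) :
    -‖T‖ ≤ lambdaSA k T := by
  obtain ⟨V, hV⟩ := exists_submodule_finrank_eq hE k
  exact le_lambdaSA hk hV fun x _ hx => neg_le_of_abs_le (abs_re_inner_map_self_le_norm T hx)

lemma lambdaSA_le_of_finrank_range_lt (hE : ¬ FiniteDimensional ℂ E) {M : Type*} [AddCommGroup M]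
    [Module ℂ M] {F : E →ₗ[ℂ] M} [FiniteDimensional ℂ (LinearMap.range F)]
    (hF : Module.finrank ℂ (LinearMap.range F) < k)
    (hc : ∀ x, ‖x‖ = 1 → F x = 0 → (⟪x, T x⟫_ℂ).re ≤ c) : lambdaSA k T ≤ c := by
  obtain ⟨V, hV⟩ := exists_submodule_finrank_eq hE k
  refine csSup_le ⟨-‖T‖, V, hV, fun x _ hx =>
    neg_le_of_abs_le (abs_re_inner_map_self_le_norm T hx)⟩ ?_
  rintro t ⟨W, hW, ht⟩
  obtain ⟨x, hxW, hx, hFx⟩ := exists_mem_norm_eq_one_map_eq_zero (hF.trans_eq hW.symm)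
  exact (ht x hxW hx).trans (hc x hx hFx)

lemma lambdaSA_reOp (k : ℕ) (T : H →L[ℂ] H) : lambdaSA k (reOp T) = lambdaSA k T := by
  simp only [lambdaSA, re_inner_reOp]

end LambdaSA

section SpectralCutoff

lemma starProjection_range_mul {𝕜 E : Type*} [RCLike 𝕜] [NormedAddCommGroup E]
    [InnerProductSpace 𝕜 E] (T : E →L[𝕜] E) [T.range.HasOrthogonalProjection] :
    T.range.starProjection * T = T := by
  ext x
  exact Submodule.starProjection_eq_self_iff.mpr ⟨x, rfl⟩

lemma mul_starProjection_range_eq_zero {𝕜 E : Type*} [RCLike 𝕜] [NormedAddCommGroup E]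
    [InnerProductSpace 𝕜 E] {S T : E →L[𝕜] E} [T.range.HasOrthogonalProjection]
    (hST : S * T = 0) : S * T.range.starProjection = 0 := by
  ext x
  obtain ⟨y, hy⟩ := T.range.starProjection_apply_mem x
  rw [mul_apply_eq_comp, ← hy]
  exact congr($hST y)

lemma re_inner_le_re_inner_of_le {𝕜 E : Type*} [RCLike 𝕜] [NormedAddCommGroup E]
    [InnerProductSpace 𝕜 E] {S T : E →L[𝕜] E} (h : S ≤ T) (x : E) :
    RCLike.re ⟪x, S x⟫_𝕜 ≤ RCLike.re ⟪x, T x⟫_𝕜 := by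
  have := ((ContinuousLinearMap.le_def S T).mp h).re_inner_nonneg_right x
  rwa [sub_apply, inner_sub_right, map_sub, sub_nonneg] at this

lemma re_inner_sub_smul_one {E : Type*} [NormedAddCommGroup E] [InnerProductSpace ℂ E]
    (T : E →L[ℂ] E) (c : ℝ) {x : E} (hx : ‖x‖ = 1) :
    (⟪x, (T - c • (1 : E →L[ℂ] E)) x⟫_ℂ).re = (⟪x, T x⟫_ℂ).re - c := by
  simp [hx, ← Complex.coe_smul]

variable {A B T : H →L[ℂ] H} {c r : ℝ} {k : ℕ}

lemma re_inner_map_self_nonneg_of_mem_range_posPart (hB : IsSelfAdjoint B) {x : H}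
    (hx : x ∈ B⁺.range) : 0 ≤ (⟪x, B x⟫_ℂ).re := by
  obtain ⟨y, rfl⟩ := hx
  have hmul : B * B⁺ = B⁺ * B⁺ := by
    nth_rw 1 [← CFC.posPart_sub_negPart B hB]
    rw [sub_mul, CFC.negPart_mul_posPart, sub_zero]
  have hBy : B (B⁺ y) = B⁺ (B⁺ y) := congr($hmul y)
  have hpos : B⁺.IsPositive :=
    (ContinuousLinearMap.nonneg_iff_isPositive _).mp (CFC.posPart_nonneg B)
  simpa only [ContinuousLinearMap.coe_coe, hBy, RCLike.re_to_complex] using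
    hpos.re_inner_nonneg_right (B⁺ y)

lemma le_smul_starProjection_range_posPart (hB : IsSelfAdjoint B) (hr : B ≤ r • 1)
    [B⁺.range.HasOrthogonalProjection] : B ≤ r • B⁺.range.starProjection := by
  set P := B⁺.range.starProjection
  have hP : IsStarProjection P := isStarProjection_starProjection
  have hPpos : P * B⁺ = B⁺ := starProjection_range_mul B⁺
  have hposP : B⁺ * P = B⁺ := by
    simpa [hP.isSelfAdjoint.star_eq, (IsSelfAdjoint.of_nonneg (CFC.posPart_nonneg B)).star_eq]
      using congr(star $hPpos)
  have hnegP : B⁻ * P = 0 := mul_starProjection_range_eq_zero (CFC.negPart_mul_posPart B)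
  have hcompress : P * B * P = B⁺ := by
    nth_rw 1 [← CFC.posPart_sub_negPart B hB]
    rw [mul_assoc, sub_mul, hposP, hnegP, sub_zero, hPpos]
  calc B ≤ B⁺ := CFC.le_posPart hB
    _ = P * B * P := hcompress.symm
    _ ≤ P * (r • 1) * P := hP.isSelfAdjoint.conjugate_le_conjugate hr
    _ = r • P := by rw [mul_smul_comm, mul_one, smul_mul_assoc, hP.isIdempotentElem.eq]

lemma isSelfAdjoint_sub_real_smul_one (hT : IsSelfAdjoint T) (c : ℝ) :
    IsSelfAdjoint (T - c • (1 : H →L[ℂ] H)) :=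
  hT.sub (.smul (.all c) (.one _))

lemma opRank_posPart_sub_smul_one_lt (hT : IsSelfAdjoint T) (hk : 1 ≤ k) (hc : lambdaSA k T < c) :
    opRank (T - c • 1)⁺ < k := by
  by_contra! hrank
  obtain ⟨V, hVR, hV⟩ := exists_submodule_le_finrank_eq hrank
  refine hc.not_ge (le_lambdaSA hk hV fun x hxV hx => ?_)
  have := re_inner_map_self_nonneg_of_mem_range_posPart (isSelfAdjoint_sub_real_smul_one hT c)
    (hVR hxV)
  rwa [re_inner_sub_smul_one T c hx, sub_nonneg] at this

theorem exists_isOrthProj_le_smul_one_add_smul (hT : IsSelfAdjoint T) (hk : 1 ≤ k)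
    (hc : lambdaSA k T < c) (hr : T ≤ (c + r) • 1) :
    ∃ P : H →L[ℂ] H, IsOrthProj P ∧ opRank P < k ∧ T ≤ c • 1 + r • P := by
  set B := T - c • (1 : H →L[ℂ] H)
  have hrank : opRank B⁺ < k := opRank_posPart_sub_smul_one_lt hT hk hc
  have : FiniteDimensional ℂ B⁺.range :=
    Module.rank_lt_aleph0_iff.mp (hrank.trans Cardinal.natCast_lt_aleph0)
  refine ⟨B⁺.range.starProjection, ⟨isSelfAdjoint_starProjection _,
    Submodule.isIdempotentElem_starProjection _⟩, ?_, ?_⟩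
  · rwa [opRank, Submodule.range_starProjection]
  · rw [← sub_le_iff_le_add']
    refine le_smul_starProjection_range_posPart (isSelfAdjoint_sub_real_smul_one hT c) ?_
    rwa [sub_le_iff_le_add', ← add_smul]

theorem exists_isOrthProj_re_inner_sub_smul_le (hH : ¬ FiniteDimensional ℂ H) (hk : 1 ≤ k)
    (hc : lambdaSA k A < c) :
    ∃ P : H →L[ℂ] H, IsOrthProj P ∧ opRank P < k ∧
      ∀ x, ‖x‖ = 1 → (⟪x, (A - (2 * ‖A‖ : ℂ) • P) x⟫_ℂ).re ≤ c := by
  have hle : reOp A ≤ (c + 2 * ‖A‖) • (1 : H →L[ℂ] H) := by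
    have hnorm : ‖reOp A‖ ≤ c + 2 * ‖A‖ := by
      linarith [norm_reOp_le A, neg_norm_le_lambdaSA hH hk A]
    rw [← Algebra.algebraMap_eq_smul_one]
    exact (isSelfAdjoint_reOp A).le_algebraMap_norm_self.trans (algebraMap_mono _ hnorm)
  obtain ⟨P, hP, hPk, hAP⟩ := exists_isOrthProj_le_smul_one_add_smul (isSelfAdjoint_reOp A) hk
    ((lambdaSA_reOp k A).trans_lt hc) hle
  refine ⟨P, hP, hPk, fun x hx => ?_⟩
  have hx_le : (⟪x, A x⟫_ℂ).re - c ≤ (⟪x, ((2 * ‖A‖) • P) x⟫_ℂ).re := by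
    rw [← re_inner_reOp, ← re_inner_sub_smul_one _ c hx]
    exact re_inner_le_re_inner_of_le (sub_le_iff_le_add'.mpr hAP) x
  have hcast : ((2 * ‖A‖) • P) x = ((2 * ‖A‖ : ℂ) • P) x := by
    simp [← Complex.coe_smul]
  rw [sub_apply, inner_sub_right, sub_re, ← hcast]
  linarith

end SpectralCutoff

section Inclusions

lemma omegaInf_eq_iInter_omegaK (A : H →L[ℂ] H) :
    omegaInf A = ⋂ (k : ℕ) (_ : 1 ≤ k), omegaK k A := by
  ext μ
  simp only [omegaInf, omegaK, Set.mem_iInter, Set.mem_ofPred_eq]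
  exact ⟨fun h k hk ξ hξ => h ξ hξ k hk, fun h ξ hξ k hk => h k hk ξ hξ⟩

lemma essNumRange_subset_iInter {E : Type*} [NormedAddCommGroup E] [InnerProductSpace ℂ E]
    (A : E →L[ℂ] E) {S : Set (E →L[ℂ] E)} (hS : ∀ F ∈ S, opRank F < Cardinal.aleph0) :
    essNumRange A ⊆ ⋂ F ∈ S, closure (numRange (A + F)) :=
  Set.biInter_subset_biInter_left hS

theorem omegaInf_subset_essNumRange (hH : ¬ FiniteDimensional ℂ H) (A : H →L[ℂ] H) :
    omegaInf A ⊆ essNumRange A := by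
  refine fun μ hμ => Set.mem_iInter₂.mpr fun F hF =>
    mem_closure_of_forall_re_exp_mul_le (convex_numRange (A + F)) fun ξ hξ c hc => ?_
  have : FiniteDimensional ℂ (LinearMap.range (F : H →ₗ[ℂ] H)) := Module.rank_lt_aleph0_iff.mp hF
  set k := Module.finrank ℂ (LinearMap.range (F : H →ₗ[ℂ] H)) + 1
  have hlambda : lambdaSA k (exp (ξ * I) • A) ≤ c := by
    refine lambdaSA_le_of_finrank_range_lt hH (Nat.lt_succ_self _) fun x hx hFx => ?_
    have hAF : (A + F) x = A x := by rw [add_apply, ← F.coe_coe, hFx, add_zero]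
    rw [smul_apply, inner_smul_right, ← hAF]
    exact hc _ ⟨x, hx, rfl⟩
  exact (hμ ξ hξ k (Nat.le_add_left 1 _)).trans ((lambdaSA_reOp k _).trans_le hlambda)

theorem iInter_subset_omegaInf (hH : ¬ FiniteDimensional ℂ H) {A : H →L[ℂ] H}
    {S : Set (H →L[ℂ] H)}
    (hS : ∀ ξ ∈ Set.Ico (0 : ℝ) (2 * Real.pi), ∀ P : H →L[ℂ] H,
      IsOrthProj P → opRank P < Cardinal.aleph0 → (2 * exp (ξ * I) * (‖A‖ : ℂ)) • P ∈ S) :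
    ⋂ F ∈ S, closure (numRange (A + F)) ⊆ omegaInf A := by
  intro μ hμ ξ _ k hk
  rw [lambdaSA_reOp]
  set e := exp (ξ * I)
  have he : ‖e‖ = 1 := norm_exp_ofReal_mul_I ξ
  have he_mul : e * e⁻¹ = 1 := mul_inv_cancel₀ (exp_ne_zero _)
  refine le_of_forall_gt_imp_ge_of_dense fun c hc => ?_
  obtain ⟨P, hP, hPk, hPc⟩ := exists_isOrthProj_re_inner_sub_smul_le hH hk hc
  obtain ⟨η, hη, hηe⟩ := exists_mem_Ico_exp_mul_I_eq (w := -e⁻¹) (by simp [he])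
  have hrot : e • (A + (2 * exp (η * I) * (‖A‖ : ℂ)) • P) = e • A - (2 * ‖e • A‖ : ℂ) • P := by
    rw [hηe, norm_smul, he, one_mul, smul_add, smul_smul, sub_eq_add_neg, ← neg_smul]
    congr 2
    linear_combination (-2 * ‖A‖ : ℂ) * he_mul
  refine re_mul_le_of_mem_closure ?_
    (Set.mem_iInter₂.mp hμ _ (hS η hη P hP (hPk.trans Cardinal.natCast_lt_aleph0)))
  rintro _ ⟨x, hx, rfl⟩
  rw [← inner_smul_right, ← smul_apply, hrot]
  exact hPc x hx

end Inclusions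

/-- For `A` on an infinite-dimensional Hilbert space and any collection `𝒮` of
finite-rank operators containing all operators `2e^{iξ}‖A‖P` with `P` a finite-rank
orthogonal projection and `ξ ∈ [0,2π)`:
`Ω_∞(A) = ⋂_{k ≥ 1} Ω_k(A) = ⋂_{F ∈ 𝒮} Cl(W(A+F)) = W_e(A)`. -/
theorem omegaInf_eq_iInter
    (hH : ¬ FiniteDimensional ℂ H) (A : H →L[ℂ] H)
    (S : Set (H →L[ℂ] H))
    (hSrank : ∀ F ∈ S, opRank F < Cardinal.aleph0)
    (hS0 : ∀ ξ ∈ Set.Ico (0 : ℝ) (2 * Real.pi), ∀ P : H →L[ℂ] H,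
      IsOrthProj P → opRank P < Cardinal.aleph0 →
      ((2 * Complex.exp (ξ * Complex.I) * (‖A‖ : ℂ)) • P) ∈ S) :
    (omegaInf A = ⋂ (k : ℕ) (_ : 1 ≤ k), omegaK k A) ∧
    (omegaInf A = ⋂ F ∈ S, closure (numRange (A + F))) ∧
    omegaInf A = essNumRange A := by
  have hess : omegaInf A ⊆ essNumRange A := omegaInf_subset_essNumRange hH A
  have hinter : essNumRange A ⊆ ⋂ F ∈ S, closure (numRange (A + F)) :=
    essNumRange_subset_iInter A hSrank
  have homega : ⋂ F ∈ S, closure (numRange (A + F)) ⊆ omegaInf A := iInter_subset_omegaInf hH hS0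
  exact ⟨omegaInf_eq_iInter_omegaK A, (hess.trans hinter).antisymm homega,
    hess.antisymm (hinter.trans homega)⟩
end
end
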